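/- arXiv:1903.09354 — 4 statements merged into one kernel-verified Lean document; each statement's English description precedes it below -/
import Mathlib

section
/- Let n ∈ ℕ and let k < 2^n have base-2 representation with digits k_1, …, k_n, where k_1 is the least significant bit, so k = Σ_{i=1}^n k_i · 2^{i−1}. Define the predicates H^k_i on bit-vectors x = (x_1, …, x_n) recursively by H^k_0(x) = False and H^k_i(x) = (x_i ∨ H^k_{i−1}(x)) if k_i = 1, and H^k_i(x) = (x_i ∧ H^k_{i−1}(x)) if k_i = 0. Then for every bit-vector x ∈ (Fin n → Bool), H^k_n applied to the bitwise negation of x holds if and only if the unsigned-integer value Σ_{i=1}^n x_i · 2^{i−1} of x is strictly less than k. -/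
/-- The recursive gadget `H^k_i` of Chakraborty et al.: `H^k_0(x) = false` and
`H^k_{i+1}(x) = x_{i+1} ∨ H^k_i(x)` if the `(i+1)`-st base-2 digit of `k`
(least significant first, i.e. `Nat.testBit k i`) is `1`, and
`H^k_{i+1}(x) = x_{i+1} ∧ H^k_i(x)` otherwise.  Bits are zero-indexed here:
`x i` is the `(i+1)`-st (i.e. `2 ^ i`-valued) bit. -/
def Hgadget (k : ℕ) (x : ℕ → Bool) : ℕ → Bool
  | 0 => false
  | i + 1 => if Nat.testBit k i then x i || Hgadget k x i else x i && Hgadget k x i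

/-!
Unsigned integers compare lexicographically from the most significant bit: that bit decides unless
the two numbers agree in it, in which case the remaining bits decide. For `x < k` this reads
`¬x_i ∨ rest` where `k` has a `1` and `¬x_i ∧ rest` where `k` has a `0`, which is the recursion
defining `H^k` on the negated bits. As `H^k_n` sees only the low `n` bits of `k`, in general it
compares with `k % 2 ^ n`.
-/

theorem add_mul_lt_add_mul_iff_lex {p r s a b : ℕ} (hr : r < p) (hs : s < p) :
    r + p * a < s + p * b ↔ a < b ∨ a = b ∧ r < s := by
  rcases lt_trichotomy a b with hab | rfl | hba
  · have : p * (a + 1) ≤ p * b := Nat.mul_le_mul_left p hab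
    grind
  · simp
  · have : p * (b + 1) ≤ p * a := Nat.mul_le_mul_left p hba
    grind

theorem sum_mul_pow_lt_pow {b n : ℕ} {d : Fin n → ℕ} (hd : ∀ i, d i < b) :
    ∑ i, d i * b ^ (i : ℕ) < b ^ n :=
  (finFunctionFinEquiv fun i ↦ (⟨d i, hd i⟩ : Fin b)).isLt

theorem Hgadget_succ_eq_true_iff (k : ℕ) (y : ℕ → Bool) (n : ℕ) :
    Hgadget k y (n + 1) = true ↔
      (!y n).toNat < (k.testBit n).toNat ∨
        (!y n).toNat = (k.testBit n).toNat ∧ Hgadget k y n = true := by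
  cases hk : k.testBit n <;> cases hy : y n <;> simp [Hgadget, hk, hy]

theorem Hgadget_neg_iff_lt_general (n k : ℕ) (y : ℕ → Bool) :
    Hgadget k y n = true ↔ ∑ i : Fin n, (!y i).toNat * 2 ^ (i : ℕ) < k % 2 ^ n := by
  induction n with
  | zero => simp [Hgadget, Nat.mod_one]
  | succ n ih =>
    have value_lt : ∑ i : Fin n, (!y i).toNat * 2 ^ (i : ℕ) < 2 ^ n :=
      sum_mul_pow_lt_pow fun i ↦ Bool.toNat_lt (!y i)
    have mod_lt : k % 2 ^ n < 2 ^ n := Nat.mod_lt k (Nat.two_pow_pos n)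
    rw [Hgadget_succ_eq_true_iff, ih, ← add_mul_lt_add_mul_iff_lex value_lt mod_lt,
      Nat.toNat_testBit, ← Nat.mod_pow_succ, Fin.sum_univ_castSucc, mul_comm (2 ^ n)]
    simp only [Fin.val_castSucc, Fin.val_last]

/-- `H^k_n` applied to the bitwise negation of `x` holds iff the unsigned-integer
value `Σ_{i<n} x_i · 2^i` of `x` is strictly less than `k`. -/
theorem Hgadget_neg_iff_lt (n k : ℕ) (hk : k < 2 ^ n) (x : Fin n → Bool) :
    Hgadget k (fun i => if h : i < n then !(x ⟨i, h⟩) else false) n = true ↔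
      (∑ i : Fin n, (x i).toNat * 2 ^ (i : ℕ)) < k := by
  simpa [Nat.mod_eq_of_lt hk] using
    Hgadget_neg_iff_lt_general n k fun i ↦ if h : i < n then !(x ⟨i, h⟩) else false
end

section
/- Let n ∈ ℕ and let k < 2^n have base-2 digits k_1, …, k_n (least significant first). Then the model count of the predicate H^k_n on bit-vectors of length n equals k, i.e., exactly k of the 2^n bit-vectors x satisfy H^k_n(x). -/
/-!
Scan the bits from the most significant one down. As long as `x_i ≠ k_i` the gadget passes on the
value of the smaller gadget; the first `i` with `x_i = k_i` makes it return `k_i`, and if there is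
no such `i` it returns `False`. So the gadget compares numbers: `H^k_n(x)` holds exactly when the
number whose binary digits are the complements of those of `x` is less than `k mod 2 ^ n`, and
complementation is a bijection.
-/

theorem mod_two_pow_succ_lt_mod_two_pow_succ_iff (m k n : ℕ) :
    m % 2 ^ (n + 1) < k % 2 ^ (n + 1) ↔
      if k.testBit n then m.testBit n = false ∨ m % 2 ^ n < k % 2 ^ n
      else m.testBit n = false ∧ m % 2 ^ n < k % 2 ^ n := by
  have hm : m % 2 ^ n < 2 ^ n := Nat.mod_lt m (by positivity)
  have hk : k % 2 ^ n < 2 ^ n := Nat.mod_lt k (by positivity)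
  rw [Nat.mod_pow_succ, Nat.mod_pow_succ, ← Nat.toNat_testBit, ← Nat.toNat_testBit]
  cases m.testBit n <;> cases k.testBit n <;>
    simp only [Bool.toNat_true, Bool.toNat_false, Bool.false_eq_true, if_true, if_false] <;> grind

theorem Hgadget_eq_true_iff_mod_lt_mod {k m n : ℕ} {x : ℕ → Bool}
    (hx : ∀ i < n, x i = !m.testBit i) :
    Hgadget k x n = true ↔ m % 2 ^ n < k % 2 ^ n := by
  induction n with
  | zero => simp [Hgadget, Nat.mod_one]
  | succ n ih =>
    have ih' : Hgadget k x n = true ↔ m % 2 ^ n < k % 2 ^ n :=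
      ih fun i hi => hx i (Nat.lt_succ_of_lt hi)
    rw [mod_two_pow_succ_lt_mod_two_pow_succ_iff, ← ih', Hgadget, hx n n.lt_succ_self]
    split_ifs <;> simp

theorem finOfBits_bijective (n : ℕ) :
    Function.Bijective (Fin.ofBits : (Fin n → Bool) → Fin (2 ^ n)) := by
  refine (Fintype.bijective_iff_injective_and_card _).2 ⟨fun x y hxy => funext fun i => ?_, by simp⟩
  have hval : Nat.ofBits x = Nat.ofBits y := congrArg Fin.val hxy
  rw [← Nat.testBit_ofBits_lt x i i.isLt, hval, Nat.testBit_ofBits_lt y i i.isLt]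

theorem Hgadget_modelCount_general (n k : ℕ) :
    (Finset.univ.filter fun x : Fin n → Bool =>
        Hgadget k (fun i => if h : i < n then x ⟨i, h⟩ else false) n = true).card =
      k % 2 ^ n := by
  have hbij : Function.Bijective fun x : Fin n → Bool => Fin.ofBits fun i => !x i :=
    (finOfBits_bijective n).comp (Equiv.piCongrRight fun _ => Equiv.boolNot).bijective
  have hgadget (x : Fin n → Bool) :
      Hgadget k (fun i => if h : i < n then x ⟨i, h⟩ else false) n = true ↔
        (Fin.ofBits fun i => !x i).val < k % 2 ^ n := by
    rw [Hgadget_eq_true_iff_mod_lt_mod (m := Nat.ofBits fun i => !x i), Fin.val_ofBits,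
      Nat.mod_eq_of_lt (Nat.ofBits_lt_two_pow _)]
    intro i hi
    simp [hi]
  calc
    _ = (Finset.univ.filter fun m : Fin (2 ^ n) => m.val < k % 2 ^ n).card :=
      Finset.card_bijective _ hbij fun x => by
        simp only [Finset.mem_filter, Finset.mem_univ, true_and, hgadget]
    _ = min (2 ^ n) (k % 2 ^ n) := Fin.card_filter_val_lt
    _ = k % 2 ^ n := min_eq_right (Nat.mod_lt k (by positivity)).le

/-- The model count of `H^k_n` on bit-vectors of length `n` equals `k`. -/
theorem Hgadget_modelCount (n k : ℕ) (hk : k < 2 ^ n) :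
    (Finset.univ.filter fun x : Fin n → Bool =>
        Hgadget k (fun i => if h : i < n then x ⟨i, h⟩ else false) n = true).card = k := by
  rw [Hgadget_modelCount_general, Nat.mod_eq_of_lt hk]
end

section
/- Let N, n ∈ ℕ and let a : Fin N → ℕ with m = Σ_{i} a(i), 0 < m, and m ≤ 2^n. Define the partial sums b(i) = Σ_{j < i} a(j) and the predicates φ_i(x) := (b(i) ≤ x ∧ x < b(i) + a(i)) on Fin (2^n). If x is drawn uniformly at random from Fin (2^n), then for every i < N the conditional probability that φ_i(x) holds given that x < m equals a(i) / m. Thus the common-denominator construction realizes any prescribed rational distribution (a(0)/m, …, a(N−1)/m) over a finite set of N outcomes. -/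
open MeasureTheory ProbabilityTheory

/-- The partial sums `b i = Σ_{j < i} a j` of `a : Fin N → ℕ`. -/
def partialSum {N : ℕ} (a : Fin N → ℕ) (i : Fin N) : ℕ :=
  ∑ j ∈ Finset.univ.filter fun j : Fin N => j < i, a j

theorem partialSum_add_le_sum {N : ℕ} (a : Fin N → ℕ) (i : Fin N) :
    partialSum a i + a i ≤ ∑ j, a j := by
  rw [partialSum, add_comm, ← Finset.sum_insert (by simp)]
  exact Finset.sum_le_sum_of_subset (Finset.subset_univ _)

theorem card_filter_fin_le_val_and_val_lt (M u v : ℕ) :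
    (Finset.univ.filter fun x : Fin M => u ≤ (x : ℕ) ∧ (x : ℕ) < v).card = min v M - u := by
  rw [← Nat.card_Ico, ← Finset.card_map Fin.valEmbedding]
  congr 1
  ext y
  simp only [Finset.mem_map, Finset.mem_filter, Finset.mem_univ, true_and, Fin.valEmbedding_apply,
    Fin.exists_iff, exists_and_left, exists_prop, exists_eq_right_right, Finset.mem_Ico, lt_inf_iff]
  omega

section UniformOfFinset

variable {α : Type*} [MeasurableSpace α] [MeasurableSingletonClass α]

theorem toMeasure_uniformOfFinset_eq_uniformOn {s : Finset α} (hs : s.Nonempty) :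
    (PMF.uniformOfFinset s hs).toMeasure = uniformOn (s : Set α) := by
  classical
  ext t ht
  rw [PMF.toMeasure_uniformOfFinset_apply hs t ht, ← uniformOn_inter_self s.finite_toSet]
  have hst : (s : Set α) ∩ t = (s.filter (· ∈ t) : Finset α) := by ext; simp
  rw [hst, uniformOn_apply_finset, Finset.inter_eq_right.mpr (Finset.filter_subset _ _)]

theorem cond_toMeasure_uniformOfFinset_of_subset {s t : Finset α} (ht : t.Nonempty) (hts : t ⊆ s) :
    (PMF.uniformOfFinset s (ht.mono hts)).toMeasure[|(t : Set α)] =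
      (PMF.uniformOfFinset t ht).toMeasure := by
  rw [toMeasure_uniformOfFinset_eq_uniformOn, toMeasure_uniformOfFinset_eq_uniformOn, uniformOn,
    cond_cond_eq_cond_inter' s.measurableSet t.measurableSet (by simp),
    Set.inter_eq_right.mpr (Finset.coe_subset.mpr hts), uniformOn]

end UniformOfFinset

theorem cond_uniformOfFintype_fin_Ico {M m u v : ℕ} [NeZero M] (hm : 0 < m) (hmM : m ≤ M)
    (hvm : v ≤ m) :
    (PMF.uniformOfFintype (Fin M)).toMeasure[|{x : Fin M | (x : ℕ) < m}]
        {x : Fin M | u ≤ (x : ℕ) ∧ (x : ℕ) < v} =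
      ((v - u : ℕ) : ENNReal) / (m : ENNReal) := by
  let s : Finset (Fin M) := Finset.univ.filter fun x => (x : ℕ) < m
  let t : Finset (Fin M) := Finset.univ.filter fun x => u ≤ (x : ℕ) ∧ (x : ℕ) < v
  have hs : s.Nonempty := ⟨0, by simpa [s] using hm⟩
  have hts : t ⊆ s := Finset.monotone_filter_right _ fun _ _ hx => hx.2.trans_le hvm
  have hs_card : s.card = m := by rw [Fin.card_filter_val_lt, min_eq_right hmM]
  have ht_card : t.card = v - u := by
    rw [card_filter_fin_le_val_and_val_lt, min_eq_left (hvm.trans hmM)]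
  rw [← Finset.coe_filter_univ, ← Finset.coe_filter_univ]
  calc (PMF.uniformOfFintype (Fin M)).toMeasure[|(s : Set (Fin M))] t
      = (PMF.uniformOfFinset s hs).toMeasure t := by
        rw [PMF.uniformOfFintype,
          cond_toMeasure_uniformOfFinset_of_subset hs (Finset.subset_univ s)]
    _ = (s ∩ t).card / s.card := by
        rw [toMeasure_uniformOfFinset_eq_uniformOn, uniformOn_apply_finset]
    _ = ((v - u : ℕ) : ENNReal) / (m : ENNReal) := by
        rw [Finset.inter_eq_right.mpr hts, hs_card, ht_card]

theorem commonDenominator_condProb_general {N M : ℕ} [NeZero M] (a : Fin N → ℕ)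
    (hm : 0 < ∑ i, a i) (hmM : (∑ i, a i) ≤ M) (i : Fin N) :
    (PMF.uniformOfFintype (Fin M)).toMeasure[|{x : Fin M | (x : ℕ) < ∑ j, a j}]
        {x : Fin M | partialSum a i ≤ (x : ℕ) ∧ (x : ℕ) < partialSum a i + a i} =
      (a i : ENNReal) / ((∑ j, a j : ℕ) : ENNReal) := by
  rw [cond_uniformOfFintype_fin_Ico hm hmM (partialSum_add_le_sum a i), Nat.add_sub_cancel_left]

/-- Drawing `x` uniformly from `Fin (2 ^ n)`, the conditional probability of the
common-denominator predicate `φ_i(x) := b i ≤ x ∧ x < b i + a i` given `x < m`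
(where `m = Σ_i a i`, `0 < m ≤ 2 ^ n`) equals `a i / m`: the construction realizes the
rational distribution `(a 0 / m, …, a (N-1) / m)` over `N` outcomes. -/
theorem commonDenominator_condProb (N n : ℕ) (a : Fin N → ℕ)
    (hm : 0 < ∑ i, a i) (hmn : (∑ i, a i) ≤ 2 ^ n) (i : Fin N) :
    (PMF.uniformOfFintype (Fin (2 ^ n))).toMeasure[|{x : Fin (2 ^ n) | (x : ℕ) < ∑ j, a j}]
        {x : Fin (2 ^ n) | partialSum a i ≤ (x : ℕ) ∧ (x : ℕ) < partialSum a i + a i} =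
      (a i : ENNReal) / ((∑ j, a j : ℕ) : ENNReal) :=
  commonDenominator_condProb_general a hm hmn i
end

section
/- Let r, k', m, n ∈ ℕ with 0 < m ≤ 2^r and k' ≤ m, and set p = k'/m. Draw x = (x_1, …, x_n) uniformly at random from (Fin (2^r))^n (n independent blocks of r unbiased coin flips each, interpreted as unsigned integers), and condition on the event that x_j < m for every j ∈ {1, …, n}. Then for every k ≤ n, the conditional probability that exactly k of the indices j satisfy x_j < k' equals (n choose k) · p^k · (1 − p)^{n−k}. That is, counting successes among n independent rational-bias coin flips realizes the Binomial distribution with parameters n and p = k'/m. -/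
open MeasureTheory ProbabilityTheory

/-!
Conditioning a product measure on a box gives the product of the conditioned factors, so the valid
trials are again independent and identically distributed. For such trials, the set of successful
indices equals a given `S` on a box whose measure depends only on `#S`, and summing over the
`(n choose k)` sets `S` with `k` elements gives the binomial law.
-/

open scoped Finset ENNReal

section ProductMeasure

variable {ι : Type*} [Fintype ι]

lemma cond_pi {α : ι → Type*} [∀ i, MeasurableSpace (α i)] (μ : ∀ i, Measure (α i))
    [∀ i, SigmaFinite (μ i)] {s : ∀ i, Set (α i)} (hs : ∀ i, μ i (s i) ≠ ∞) :
    (Measure.pi μ)[|Set.univ.pi s] = Measure.pi fun i ↦ (μ i)[|s i] := by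
  refine (Measure.pi_eq fun t _ ↦ ?_).symm
  simp only [ProbabilityTheory.cond, Measure.restrict_pi_pi, Measure.smul_apply, Measure.pi_pi,
    smul_eq_mul, Finset.prod_mul_distrib]
  rw [ENNReal.prod_inv_distrib fun _ _ j _ _ ↦ .inr (hs j)]

lemma setOf_filter_eq_eq_univ_pi {α : ι → Type*} (p : ∀ i, α i → Prop)
    [∀ i, DecidablePred (p i)] (S : Finset ι) :
    {x : ∀ i, α i | ({i | p i (x i)} : Finset ι) = S} =
      Set.univ.pi fun i ↦ {a | p i a ↔ i ∈ S} := by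
  ext x
  simp [Finset.ext_iff]

lemma pi_setOf_filter_eq [DecidableEq ι] {α : ι → Type*} [∀ i, MeasurableSpace (α i)]
    (μ : ∀ i, Measure (α i)) [∀ i, SigmaFinite (μ i)] (p : ∀ i, α i → Prop)
    [∀ i, DecidablePred (p i)] (S : Finset ι) :
    Measure.pi μ {x | ({i | p i (x i)} : Finset ι) = S} =
      (∏ i ∈ S, μ i {a | p i a}) * ∏ i ∈ Sᶜ, μ i {a | ¬p i a} := by
  rw [setOf_filter_eq_eq_univ_pi, Measure.pi_pi, ← Finset.prod_mul_prod_compl S]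
  congr 1 <;> refine Finset.prod_congr rfl fun i hi ↦ ?_
  · simp only [hi, iff_true]
  · simp only [Finset.mem_compl.1 hi, iff_false]

variable {α : Type*} [MeasurableSpace α] (μ : Measure α) [SigmaFinite μ]

lemma pi_setOf_card_filter_eq {p : α → Prop} [DecidablePred p] (hp : MeasurableSet {a | p a})
    (k : ℕ) :
    Measure.pi (fun _ : ι ↦ μ) {x | #{i | p (x i)} = k} =
      (Fintype.card ι).choose k * μ {a | p a} ^ k * μ {a | ¬p a} ^ (Fintype.card ι - k) := by
  classical
  let successes (x : ι → α) : Finset ι := {i | p (x i)}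
  have measurableSet_fiber (S : Finset ι) : MeasurableSet (successes ⁻¹' {S}) := by
    change MeasurableSet {x | successes x = S}
    rw [setOf_filter_eq_eq_univ_pi fun _ ↦ p]
    exact .univ_pi fun i ↦ hp.iff (.const _)
  have measure_fiber (S : Finset ι) (hS : S ∈ Finset.powersetCard k Finset.univ) :
      Measure.pi (fun _ : ι ↦ μ) (successes ⁻¹' {S}) =
        μ {a | p a} ^ k * μ {a | ¬p a} ^ (Fintype.card ι - k) := by
    have hcard : #S = k := (Finset.mem_powersetCard.1 hS).2
    refine (pi_setOf_filter_eq (fun _ ↦ μ) (fun _ ↦ p) S).trans ?_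
    rw [Finset.prod_const, Finset.prod_const, Finset.card_compl, hcard]
  calc
    Measure.pi (fun _ : ι ↦ μ) {x | #(successes x) = k}
      = Measure.pi (fun _ : ι ↦ μ)
          (successes ⁻¹' (Finset.powersetCard k Finset.univ : Finset (Finset ι))) := by
        simp [Set.preimage]
    _ = ∑ S ∈ Finset.powersetCard k Finset.univ,
          Measure.pi (fun _ : ι ↦ μ) (successes ⁻¹' {S}) :=
        (sum_measure_preimage_singleton _ fun S _ ↦ measurableSet_fiber S).symm
    _ = _ := by
        rw [Finset.sum_congr rfl measure_fiber, Finset.sum_const, Finset.card_powersetCard,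
          Finset.card_univ, nsmul_eq_mul, mul_assoc]

theorem binomial_from_rational_coins_general {valid success : α → Prop} [DecidablePred success]
    (hvalid_ne_zero : μ {a | valid a} ≠ 0) (hvalid_ne_top : μ {a | valid a} ≠ ∞)
    (hsuccess : MeasurableSet {a | success a}) (k : ℕ) :
    (Measure.pi fun _ : ι ↦ μ)[|{x | ∀ i, valid (x i)}] {x | #{i | success (x i)} = k} =
      (Fintype.card ι).choose k * μ[{a | success a} | {a | valid a}] ^ k *
        (1 - μ[{a | success a} | {a | valid a}]) ^ (Fintype.card ι - k) := by
  have := cond_isProbabilityMeasure_of_finite hvalid_ne_zero hvalid_ne_top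
  have all_valid : {x : ι → α | ∀ i, valid (x i)} = Set.univ.pi fun _ ↦ {a | valid a} := by
    ext x
    simp
  rw [all_valid, cond_pi _ fun _ ↦ hvalid_ne_top, pi_setOf_card_filter_eq _ hsuccess,
    ← prob_compl_eq_one_sub hsuccess, Set.compl_ofPred]

end ProductMeasure

section Uniform

variable {α : Type*} [Fintype α] [Nonempty α] [MeasurableSpace α] [MeasurableSingletonClass α]

lemma toMeasure_uniformOfFintype_eq_uniformOn_univ :
    (PMF.uniformOfFintype α).toMeasure = uniformOn Set.univ := by
  refine Measure.ext_of_singleton fun a ↦ ?_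
  rw [PMF.toMeasure_apply_singleton _ _ (.singleton a), PMF.uniformOfFintype_apply,
    uniformOn_univ, Measure.count_singleton, one_div]

lemma toMeasure_uniformOfFintype_pi (ι : Type*) [Fintype ι] [DecidableEq ι] :
    (PMF.uniformOfFintype (ι → α)).toMeasure =
      Measure.pi fun _ ↦ (PMF.uniformOfFintype α).toMeasure := by
  simp only [toMeasure_uniformOfFintype_eq_uniformOn_univ, ← uniformOn_pi, Set.pi_univ]

lemma cond_toMeasure_uniformOfFintype (s : Set α) :
    (PMF.uniformOfFintype α).toMeasure[|s] = uniformOn s := by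
  rw [toMeasure_uniformOfFintype_eq_uniformOn_univ, uniformOn,
    cond_cond_eq_cond_inter .univ .of_discrete, Set.univ_inter, uniformOn]

lemma toMeasure_uniformOfFintype_ne_zero {s : Set α} (hs : s.Nonempty) :
    (PMF.uniformOfFintype α).toMeasure s ≠ 0 := by
  rw [Ne, PMF.toMeasure_apply_eq_zero_iff _ .of_discrete, PMF.support_uniformOfFintype]
  simpa using hs.ne_empty

end Uniform

lemma uniformOn_coe_of_subset {α : Type*} [MeasurableSpace α] [MeasurableSingletonClass α]
    {s t : Finset α} (hts : t ⊆ s) : uniformOn (s : Set α) t = #t / #s := by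
  classical
  rw [uniformOn_apply_finset, Finset.inter_eq_right.2 hts]

lemma uniformOn_setOf_val_lt {N a b : ℕ} (hab : a ≤ b) (hb : b ≤ N) :
    uniformOn {i : Fin N | (i : ℕ) < b} {i | (i : ℕ) < a} = a / b := by
  have hsubset : Finset.univ.filter (fun i : Fin N ↦ (i : ℕ) < a) ⊆
      Finset.univ.filter fun i ↦ (i : ℕ) < b :=
    Finset.monotone_filter_right _ fun _ _ hi ↦ hi.trans_le hab
  simpa only [Finset.coe_filter_univ, Fin.card_filter_val_lt, min_eq_right hb,
    min_eq_right (hab.trans hb)] using uniformOn_coe_of_subset hsubset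

/-- Binomial distribution from rational-bias coins: draw `n` independent blocks of `r`
unbiased coin flips (i.e. `x : Fin n → Fin (2 ^ r)` uniformly), condition on every block
being valid (`x j < m`), and count the successful trials (`x j < k'`).  For every `k ≤ n`,
the conditional probability of exactly `k` successes is `(n choose k) · p^k · (1-p)^(n-k)`
with `p = k' / m`. -/
theorem binomial_from_rational_coins (r k' m n : ℕ) (hm : 0 < m) (hmr : m ≤ 2 ^ r)
    (hk' : k' ≤ m) (k : ℕ) (hk : k ≤ n) :
    (PMF.uniformOfFintype (Fin n → Fin (2 ^ r))).toMeasure[|{x | ∀ j, (x j : ℕ) < m}]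
        {x | (Finset.univ.filter fun j : Fin n => (x j : ℕ) < k').card = k} =
      (n.choose k : ENNReal) * ((k' : ENNReal) / (m : ENNReal)) ^ k *
        (1 - (k' : ENNReal) / (m : ENNReal)) ^ (n - k) := by
  have valid_ne_zero : (PMF.uniformOfFintype (Fin (2 ^ r))).toMeasure {a | (a : ℕ) < m} ≠ 0 :=
    toMeasure_uniformOfFintype_ne_zero ⟨0, hm⟩
  rw [toMeasure_uniformOfFintype_pi, binomial_from_rational_coins_general
      (success := fun a : Fin (2 ^ r) ↦ (a : ℕ) < k') _ valid_ne_zero (measure_ne_top _ _)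
      .of_discrete,
    cond_toMeasure_uniformOfFintype, uniformOn_setOf_val_lt hk' hmr, Fintype.card_fin]
end
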